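/- Let ζ ∈ (-1/2, ∞), α ∈ (0,2), and 0 < C₀ ≤ 1. Then there exist constants c, C > 0 (depending only on ζ, α, C₀) such that for all τ ∈ [C₀, 1/C₀] and all z, s > 0: c · p_ζ^{(α)}(1,z,s) ≤ p_ζ^{(α)}(τ,z,s) ≤ C · p_ζ^{(α)}(1,z,s). -/

import Mathlib

/-
The function `e^(-x) x^(-(ν + 2)) I_ν(x)` is nonincreasing for `ν > -1` (AM-GM on the power
series), so `u^(ζ + 5/2) p_ζ^{(2)}(u, r, s)` is nondecreasing in `u`. Hence, with `M = ζ + 5/2`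
and `μ_t` the `α/2`-stable law at time `t`, `p_ζ^{(α)}(t, r, s)` is the integral of a
nondecreasing function of `u` against `u^(-M) μ_t(du)`, and by the layer cake formula it
suffices to compare the masses that these measures, for different `t`, give to half-lines
`[r, ∞)`. These masses are of order `max(r, 1)^(-(M + α/2))` uniformly for `t` in a compact subset
of `(0, ∞)`: the upper bound combines the finite negative moments of `μ_t` with a Markov bound for
its tail, and the lower bound uses that the behaviour of the Laplace transform near `0` forces a
tail of order `t R^(-α/2)`.
-/

open MeasureTheory Real Set Filter

/-- Modified Bessel function of the first kind of order `ν`. -/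
noncomputable def besselI (ν x : ℝ) : ℝ :=
  ∑' k : ℕ, (x / 2) ^ (2 * (k : ℝ) + ν) / ((Nat.factorial k : ℝ) * Real.Gamma ((k : ℝ) + ν + 1))

/-- The Bessel heat kernel `p_ζ^{(2)}(t,r,s)`. -/
noncomputable def besselHeat (ζ t r s : ℝ) : ℝ :=
  (r * s) ^ ((1 : ℝ) / 2 - ζ) / (2 * t) * Real.exp (-(r ^ 2 + s ^ 2) / (4 * t)) *
    besselI (ζ - 1 / 2) (r * s / (2 * t))

/-- `σ` is a family of `α/2`-stable subordinator densities. -/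
def IsStableSubordinatorDensity (α : ℝ) (σ : ℝ → ℝ → ℝ) : Prop :=
  (∀ t, 0 < t → ∀ τ, 0 < τ → 0 ≤ σ t τ) ∧
  (∀ t, 0 < t → Measurable (σ t)) ∧
  (∀ t l : ℝ, 0 < t → 0 ≤ l →
    (∫ τ in Ioi (0 : ℝ), Real.exp (-τ * l) * σ t τ) = Real.exp (-t * l ^ (α / 2)))

/-- The `α/2`-subordinated Bessel heat kernel `p_ζ^{(α)}(t,r,s)`. -/
noncomputable def subKernel (ζ : ℝ) (σ : ℝ → ℝ → ℝ) (t r s : ℝ) : ℝ :=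
  ∫ τ in Ioi (0 : ℝ), besselHeat ζ τ r s * σ t τ

open scoped ENNReal

lemma antitoneOn_exp_mul_rpow_mul {f f' : ℝ → ℝ} {c d : ℝ}
    (hf : ∀ w, 0 < w → HasDerivAt f (f' w) w)
    (hle : ∀ w, 0 < w → w * f' w ≤ (c * w + d) * f w) :
    AntitoneOn (fun w ↦ exp (-(c * w)) * w ^ (-d) * f w) (Ioi 0) := by
  have hderiv (w : ℝ) (hw : 0 < w) : HasDerivAt (fun w ↦ exp (-(c * w)) * w ^ (-d) * f w)
      (exp (-(c * w)) * w ^ (-d - 1) * (w * f' w - (c * w + d) * f w)) w := by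
    have hexp : HasDerivAt (fun w ↦ exp (-(c * w))) (exp (-(c * w)) * -c) w := by
      simpa using ((hasDerivAt_id w).const_mul c).neg.exp
    refine ((hexp.mul (hasDerivAt_rpow_const (Or.inl hw.ne'))).mul (hf w hw)).congr_deriv ?_
    simp only [Pi.mul_apply]
    rw [show w ^ (-d) = w ^ (-d - 1) * w by rw [← rpow_add_one hw.ne']; ring_nf]
    ring
  refine antitoneOn_of_hasDerivWithinAt_nonpos (convex_Ioi 0)
    (fun w hw ↦ (hderiv w hw).continuousAt.continuousWithinAt)
    (fun w hw ↦ (hderiv w (interior_subset hw)).hasDerivWithinAt) fun w hw ↦ ?_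
  have hw : 0 < w := interior_subset hw
  exact mul_nonpos_of_nonneg_of_nonpos (by positivity) (sub_nonpos.2 (hle w hw))

section PowerSeries

variable {a : ℕ → ℝ}

lemma summable_mul_pow_two_mul (ha : ∀ k, 0 ≤ a k) (hrec : ∀ k : ℕ, (k : ℝ) ^ 2 * a (k + 1) ≤ a k)
    (w : ℝ) : Summable fun k ↦ a k * w ^ (2 * k) := by
  refine summable_of_ratio_norm_eventually_le (r := 1 / 2) (by norm_num) ?_
  filter_upwards [(tendsto_pow_atTop two_ne_zero).comp tendsto_natCast_atTop_atTop
    |>.eventually_ge_atTop (2 * w ^ 2)] with k hk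
  have hk : w ^ 2 ≤ 1 / 2 * (k : ℝ) ^ 2 := by linarith [show 2 * w ^ 2 ≤ (k : ℝ) ^ 2 from hk]
  have hterm (j : ℕ) : ‖a j * w ^ (2 * j)‖ = a j * (w ^ 2) ^ j := by
    rw [pow_mul, norm_of_nonneg (mul_nonneg (ha j) (by positivity))]
  rw [hterm, hterm]
  have := ha (k + 1)
  calc a (k + 1) * (w ^ 2) ^ (k + 1) = w ^ 2 * (a (k + 1) * (w ^ 2) ^ k) := by ring
    _ ≤ 1 / 2 * (k : ℝ) ^ 2 * (a (k + 1) * (w ^ 2) ^ k) := by gcongr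
    _ = 1 / 2 * ((k : ℝ) ^ 2 * a (k + 1) * (w ^ 2) ^ k) := by ring
    _ ≤ 1 / 2 * (a k * (w ^ 2) ^ k) := by gcongr; exact hrec k

lemma sum_sub_one_mul_pow_le (ha : ∀ k, 0 ≤ a k) (hrec : ∀ k : ℕ, (k : ℝ) ^ 2 * a (k + 1) ≤ a k)
    {w : ℝ} (hw : 0 ≤ w) (n : ℕ) :
    ∑ k ∈ Finset.range n, ((k : ℝ) - 1) * (a k * w ^ (2 * k)) ≤
      w * ∑ k ∈ Finset.range n, a k * w ^ (2 * k) := by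
  have hterm (k : ℕ) : 0 ≤ a k * w ^ (2 * k) := mul_nonneg (ha k) (by positivity)
  cases n with
  | zero => simp
  | succ n =>
    -- AM-GM for `k` and `w`, the term in `k ^ 2` being absorbed by the recursion.
    have hamgm (k : ℕ) : (k : ℝ) * (a (k + 1) * w ^ (2 * (k + 1))) ≤
        w / 2 * (a (k + 1) * w ^ (2 * (k + 1)) + a k * w ^ (2 * k)) := by
      have hsq : 0 ≤ w / 2 * (w - k) ^ 2 * (a (k + 1) * w ^ (2 * k)) :=
        mul_nonneg (by positivity) (mul_nonneg (ha _) (by positivity))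
      have hstep : w / 2 * ((k : ℝ) ^ 2 * a (k + 1) * w ^ (2 * k)) ≤
          w / 2 * (a k * w ^ (2 * k)) := by
        gcongr
        exact hrec k
      linear_combination hsq + hstep
    calc ∑ k ∈ Finset.range (n + 1), ((k : ℝ) - 1) * (a k * w ^ (2 * k))
        ≤ ∑ k ∈ Finset.range n, (k : ℝ) * (a (k + 1) * w ^ (2 * (k + 1))) := by
          rw [Finset.sum_range_succ']
          push_cast
          simp only [add_sub_cancel_right, pow_zero, mul_one]
          linarith [ha 0]
      _ ≤ ∑ k ∈ Finset.range n, w / 2 * (a (k + 1) * w ^ (2 * (k + 1)) + a k * w ^ (2 * k)) :=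
          Finset.sum_le_sum fun k _ ↦ hamgm k
      _ = w / 2 * (∑ k ∈ Finset.range n, a (k + 1) * w ^ (2 * (k + 1)) +
            ∑ k ∈ Finset.range n, a k * w ^ (2 * k)) := by
          rw [← Finset.mul_sum, Finset.sum_add_distrib]
      _ ≤ w / 2 * (∑ k ∈ Finset.range (n + 1), a k * w ^ (2 * k) +
            ∑ k ∈ Finset.range (n + 1), a k * w ^ (2 * k)) := by
          gcongr w / 2 * (?_ + ?_)
          · rw [Finset.sum_range_succ']
            exact le_add_of_nonneg_right (hterm 0)
          · rw [Finset.sum_range_succ]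
            exact le_add_of_nonneg_right (hterm n)
      _ = w * ∑ k ∈ Finset.range (n + 1), a k * w ^ (2 * k) := by ring

lemma antitoneOn_exp_mul_rpow_mul_sum (ha : ∀ k, 0 ≤ a k)
    (hrec : ∀ k : ℕ, (k : ℝ) ^ 2 * a (k + 1) ≤ a k) (n : ℕ) :
    AntitoneOn (fun w ↦ exp (-(2 * w)) * w ^ (-2 : ℝ) * ∑ k ∈ Finset.range n, a k * w ^ (2 * k))
      (Ioi 0) := by
  refine antitoneOn_exp_mul_rpow_mul
    (f' := fun w ↦ ∑ k ∈ Finset.range n, a k * (↑(2 * k) * w ^ (2 * k - 1)))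
    (fun w _ ↦ HasDerivAt.fun_sum fun k _ ↦ (hasDerivAt_pow (2 * k) w).const_mul (a k))
    fun w hw ↦ ?_
  have hmul (k : ℕ) : w * (a k * (↑(2 * k) * w ^ (2 * k - 1))) =
      2 * (((k : ℝ) - 1) * (a k * w ^ (2 * k))) + 2 * (a k * w ^ (2 * k)) := by
    cases k with
    | zero => simp
    | succ k =>
      rw [show 2 * (k + 1) - 1 = 2 * k + 1 by lia]
      push_cast
      ring
  calc w * ∑ k ∈ Finset.range n, a k * (↑(2 * k) * w ^ (2 * k - 1))
      = 2 * ∑ k ∈ Finset.range n, ((k : ℝ) - 1) * (a k * w ^ (2 * k)) +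
          2 * ∑ k ∈ Finset.range n, a k * w ^ (2 * k) := by
        simp only [Finset.mul_sum, hmul, Finset.sum_add_distrib]
    _ ≤ 2 * (w * ∑ k ∈ Finset.range n, a k * w ^ (2 * k)) +
          2 * ∑ k ∈ Finset.range n, a k * w ^ (2 * k) := by
        gcongr
        exact sum_sub_one_mul_pow_le ha hrec hw.le n
    _ = (2 * w + 2) * ∑ k ∈ Finset.range n, a k * w ^ (2 * k) := by ring

lemma antitoneOn_exp_mul_rpow_mul_tsum (ha : ∀ k, 0 ≤ a k)
    (hrec : ∀ k : ℕ, (k : ℝ) ^ 2 * a (k + 1) ≤ a k) :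
    AntitoneOn (fun w ↦ exp (-(2 * w)) * w ^ (-2 : ℝ) * ∑' k, a k * w ^ (2 * k)) (Ioi 0) := by
  have hlim (w : ℝ) :=
    (summable_mul_pow_two_mul ha hrec w).hasSum.tendsto_sum_nat.const_mul
      (exp (-(2 * w)) * w ^ (-2 : ℝ))
  exact fun x hx y hy hxy ↦ le_of_tendsto_of_tendsto' (hlim y) (hlim x) fun n ↦
    antitoneOn_exp_mul_rpow_mul_sum ha hrec n hx hy hxy

end PowerSeries

section Bessel

variable {ν : ℝ}

/-- The coefficient of `(x / 2) ^ (2 * k + ν)` in the power series of `besselI ν x`. -/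
noncomputable def besselCoeff (ν : ℝ) (k : ℕ) : ℝ :=
  (k.factorial * Gamma (k + ν + 1))⁻¹

lemma besselCoeff_nonneg (hν : -1 < ν) (k : ℕ) : 0 ≤ besselCoeff ν k := by
  have := Gamma_nonneg_of_nonneg (show 0 ≤ (k : ℝ) + ν + 1 by linarith [k.cast_nonneg (α := ℝ)])
  unfold besselCoeff
  positivity

lemma besselCoeff_eq_mul_succ (hν : -1 < ν) (k : ℕ) :
    besselCoeff ν k = (k + 1) * (k + ν + 1) * besselCoeff ν (k + 1) := by
  have hpos : 0 < (k : ℝ) + ν + 1 := by linarith [k.cast_nonneg (α := ℝ)]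
  have hGamma : Gamma ((k + 1 : ℕ) + ν + 1) = (k + ν + 1) * Gamma (k + ν + 1) := by
    rw [← Gamma_add_one hpos.ne']
    push_cast
    ring_nf
  unfold besselCoeff
  rw [hGamma, Nat.factorial_succ]
  push_cast
  field_simp

lemma sq_mul_besselCoeff_succ_le (hν : -1 < ν) (k : ℕ) :
    (k : ℝ) ^ 2 * besselCoeff ν (k + 1) ≤ besselCoeff ν k := by
  rw [besselCoeff_eq_mul_succ hν k, sq]
  have := besselCoeff_nonneg hν (k + 1)
  gcongr <;> linarith

lemma besselI_eq_rpow_mul_tsum {x : ℝ} (hx : 0 < x) :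
    besselI ν x = (x / 2) ^ ν * ∑' k, besselCoeff ν k * (x / 2) ^ (2 * k) := by
  unfold besselI besselCoeff
  rw [← tsum_mul_left]
  refine tsum_congr fun k ↦ ?_
  rw [rpow_add (by positivity), ← rpow_natCast (x / 2) (2 * k)]
  push_cast
  ring

lemma besselI_nonneg (hν : -1 < ν) {x : ℝ} (hx : 0 < x) : 0 ≤ besselI ν x := by
  rw [besselI_eq_rpow_mul_tsum hx]
  exact mul_nonneg (by positivity)
    (tsum_nonneg fun k ↦ mul_nonneg (besselCoeff_nonneg hν k) (by positivity))

lemma antitoneOn_exp_neg_mul_rpow_mul_besselI (hν : -1 < ν) :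
    AntitoneOn (fun x ↦ exp (-x) * x ^ (-(ν + 2)) * besselI ν x) (Ioi 0) := by
  have heq : EqOn (fun x ↦ exp (-x) * x ^ (-(ν + 2)) * besselI ν x) (fun x ↦ 2 ^ (-(ν + 2)) *
      (exp (-(2 * (x / 2))) * (x / 2) ^ (-2 : ℝ) * ∑' k, besselCoeff ν k * (x / 2) ^ (2 * k)))
      (Ioi 0) := by
    intro x hx
    have hx2 : 0 < x / 2 := half_pos hx
    have hrpow : x ^ (-(ν + 2)) * (x / 2) ^ ν = 2 ^ (-(ν + 2)) * (x / 2) ^ (-2 : ℝ) := by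
      nth_rewrite 1 [show x = 2 * (x / 2) by ring]
      rw [mul_rpow two_pos.le hx2.le, mul_assoc, ← rpow_add hx2]
      ring_nf
    simp only [besselI_eq_rpow_mul_tsum (mem_Ioi.1 hx), mul_div_cancel₀ x two_ne_zero]
    linear_combination exp (-x) * (∑' k, besselCoeff ν k * (x / 2) ^ (2 * k)) * hrpow
  refine AntitoneOn.congr (fun x hx y hy hxy ↦ ?_) heq.symm
  exact mul_le_mul_of_nonneg_left (antitoneOn_exp_mul_rpow_mul_tsum (besselCoeff_nonneg hν)
    (sq_mul_besselCoeff_succ_le hν) (mem_Ioi.2 (half_pos hx)) (mem_Ioi.2 (half_pos hy))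
    (by gcongr)) (by positivity)

variable {ζ r s : ℝ}

lemma besselHeat_nonneg (hζ : -1 / 2 < ζ) {t : ℝ} (ht : 0 < t) (hr : 0 < r) (hs : 0 < s) :
    0 ≤ besselHeat ζ t r s := by
  have := besselI_nonneg (ν := ζ - 1 / 2) (by linarith) (show 0 < r * s / (2 * t) by positivity)
  unfold besselHeat
  positivity

lemma measurable_besselHeat : Measurable fun t ↦ besselHeat ζ t r s := by
  unfold besselHeat besselI
  refine Measurable.mul (by fun_prop) (Measurable.tsum fun k ↦ ?_)
  fun_prop

lemma rpow_mul_besselHeat_eq {t : ℝ} (ht : 0 < t) (hr : 0 < r) (hs : 0 < s) :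
    t ^ (ζ + 5 / 2) * besselHeat ζ t r s = (r * s) ^ (1 / 2 - ζ) / 2 * (r * s / 2) ^ (ζ + 3 / 2) *
      exp (-((r - s) ^ 2 / (4 * t))) * (exp (-(r * s / (2 * t))) *
        (r * s / (2 * t)) ^ (-(ζ - 1 / 2 + 2)) * besselI (ζ - 1 / 2) (r * s / (2 * t))) := by
  have hexp : exp (-(r ^ 2 + s ^ 2) / (4 * t)) =
      exp (-((r - s) ^ 2 / (4 * t))) * exp (-(r * s / (2 * t))) := by
    rw [← exp_add]
    congr 1
    field_simp
    ring
  have hrpow : t ^ (ζ + 5 / 2) =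
      (r * s / 2) ^ (ζ + 3 / 2) * (r * s / (2 * t)) ^ (-(ζ - 1 / 2 + 2)) * t := by
    rw [← div_div, show -(ζ - 1 / 2 + 2) = -(ζ + 3 / 2) by ring,
      rpow_neg (x := r * s / 2 / t) (by positivity), div_rpow (by positivity) ht.le,
      show ζ + 5 / 2 = ζ + 3 / 2 + 1 by ring, rpow_add_one ht.ne']
    field_simp
  unfold besselHeat
  rw [hexp, hrpow]
  field_simp

lemma monotoneOn_rpow_mul_besselHeat (hζ : -1 / 2 < ζ) (hr : 0 < r) (hs : 0 < s) :
    MonotoneOn (fun t ↦ t ^ (ζ + 5 / 2) * besselHeat ζ t r s) (Ioi 0) := by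
  intro u hu v hv huv
  have hu : 0 < u := hu
  have hv : 0 < v := hv
  have hν : -1 < ζ - 1 / 2 := by linarith
  have hI := besselI_nonneg hν (show 0 < r * s / (2 * u) by positivity)
  simp only [rpow_mul_besselHeat_eq hu hr hs, rpow_mul_besselHeat_eq hv hr hs]
  gcongr _ * exp (-?_) * ?_
  · gcongr
  · exact antitoneOn_exp_neg_mul_rpow_mul_besselI hν (mem_Ioi.2 (by positivity))
      (mem_Ioi.2 (by positivity)) (by gcongr)

end Bessel

section LayerCake

variable {μ ν : Measure ℝ} {C : ℝ≥0∞}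

lemma measure_le_mul_measure_of_isUpperSet (h : ∀ a, μ (Ici a) ≤ C * ν (Ioi a)) {U : Set ℝ}
    (hU : IsUpperSet U) : μ U ≤ C * ν U := by
  rcases U.eq_empty_or_nonempty with rfl | hne
  · simp
  by_cases hbdd : BddBelow U
  · calc μ U ≤ μ (Ici (sInf U)) := measure_mono fun _ hx ↦ csInf_le hbdd hx
      _ ≤ C * ν (Ioi (sInf U)) := h _
      _ ≤ C * ν U := by
        gcongr
        intro x hx
        obtain ⟨y, hyU, hyx⟩ := (csInf_lt_iff hbdd hne).1 hx
        exact hU hyx.le hyU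
  · have huniv : U = univ := eq_univ_of_forall fun x ↦ by
      obtain ⟨y, hyU, hyx⟩ := not_bddBelow_iff.1 hbdd x
      exact hU hyx.le hyU
    rw [huniv]
    refine le_of_tendsto' (tendsto_measure_Ici_atBot μ) fun a ↦ (h a).trans ?_
    gcongr
    exact subset_univ _

lemma lintegral_le_mul_lintegral_of_monotone (hC : C ≠ ∞) (h : ∀ a, μ (Ici a) ≤ C * ν (Ioi a))
    {f : ℝ → ℝ} (hf : Monotone f) (hf0 : 0 ≤ f) :
    ∫⁻ u, .ofReal (f u) ∂μ ≤ C * ∫⁻ u, .ofReal (f u) ∂ν := by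
  rw [lintegral_eq_lintegral_meas_lt μ (.of_forall hf0) hf.measurable.aemeasurable,
    lintegral_eq_lintegral_meas_lt ν (.of_forall hf0) hf.measurable.aemeasurable,
    ← lintegral_const_mul' _ _ hC]
  exact lintegral_mono fun _ ↦
    measure_le_mul_measure_of_isUpperSet h fun _ _ hxy hx ↦ lt_of_lt_of_le hx (hf hxy)

end LayerCake

lemma half_min_one_le_one_sub_exp_neg {x : ℝ} (hx : 0 ≤ x) : min x 1 / 2 ≤ 1 - exp (-x) := by
  have hexp : exp (-x) ≤ (1 + x)⁻¹ := by
    rw [exp_neg]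
    gcongr
    linarith [add_one_le_exp x]
  have hmin : min x 1 / 2 ≤ x / (1 + x) := by
    rw [div_le_div_iff₀ two_pos (by positivity)]
    rcases min_cases x 1 with ⟨h, hx1⟩ | ⟨h, hx1⟩ <;> rw [h] <;> nlinarith
  calc min x 1 / 2 ≤ x / (1 + x) := hmin
    _ = 1 - (1 + x)⁻¹ := by field_simp; ring
    _ ≤ 1 - exp (-x) := by gcongr

/-- `μ` is the law at time `t` of a `β`-stable subordinator, normalised to have Laplace exponent
`l ↦ l ^ β`. -/
structure IsStableLaw (β t : ℝ) (μ : Measure ℝ) : Prop extends IsProbabilityMeasure μ where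
  ae_pos : ∀ᵐ u ∂μ, 0 < u
  integral_exp : ∀ l, 0 ≤ l → ∫ u, exp (-(l * u)) ∂μ = exp (-(t * l ^ β))

namespace IsStableLaw

variable {β t : ℝ} {μ : Measure ℝ}

lemma integrable_exp (h : IsStableLaw β t μ) {l : ℝ} (hl : 0 ≤ l) :
    Integrable (fun u ↦ exp (-(l * u))) μ :=
  .of_integral_ne_zero (by rw [h.integral_exp l hl]; positivity)

lemma integrable_one_sub_exp (h : IsStableLaw β t μ) {l : ℝ} (hl : 0 ≤ l) :
    Integrable (fun u ↦ 1 - exp (-(l * u))) μ :=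
  have := h.toIsProbabilityMeasure
  (integrable_const 1).sub (h.integrable_exp hl)

lemma integral_one_sub_exp (h : IsStableLaw β t μ) {l : ℝ} (hl : 0 ≤ l) :
    ∫ u, (1 - exp (-(l * u))) ∂μ = 1 - exp (-(t * l ^ β)) := by
  have := h.toIsProbabilityMeasure
  rw [integral_sub (integrable_const 1) (h.integrable_exp hl), h.integral_exp l hl]
  simp

lemma real_Ici_le (h : IsStableLaw β t μ) {R : ℝ} (hR : 0 < R) :
    μ.real (Ici R) ≤ 2 * (t * R ^ (-β)) := by
  have := h.toIsProbabilityMeasure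
  have hnonneg : ∀ᵐ u ∂μ, 0 ≤ 1 - exp (-(R⁻¹ * u)) := by
    filter_upwards [h.ae_pos] with u hu
    exact sub_nonneg.2 (exp_le_one_iff.2 (neg_nonpos.2 (by positivity)))
  have hsubset : Ici R ⊆ {u | 1 / 2 ≤ 1 - exp (-(R⁻¹ * u))} := fun u hu ↦ by
    have hu1 : 1 ≤ R⁻¹ * u := by rwa [inv_mul_eq_div, one_le_div hR]
    simpa [min_eq_right hu1] using half_min_one_le_one_sub_exp_neg (zero_le_one.trans hu1)
  have hMarkov : 1 / 2 * μ.real (Ici R) ≤ 1 - exp (-(t * R⁻¹ ^ β)) :=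
    calc 1 / 2 * μ.real (Ici R) ≤ 1 / 2 * μ.real {u | 1 / 2 ≤ 1 - exp (-(R⁻¹ * u))} := by
          gcongr
          finiteness
      _ ≤ ∫ u, (1 - exp (-(R⁻¹ * u))) ∂μ :=
          mul_meas_ge_le_integral_of_nonneg hnonneg (h.integrable_one_sub_exp (by positivity)) _
      _ = 1 - exp (-(t * R⁻¹ ^ β)) := h.integral_one_sub_exp (by positivity)
  rw [inv_rpow hR.le, ← rpow_neg hR.le] at hMarkov
  linarith [one_sub_le_exp_neg (t * R ^ (-β))]

lemma one_sub_exp_le_real_Ioi_add (h : IsStableLaw β t μ) {R ε : ℝ} (hR : 0 < R) (hε : 0 ≤ ε) :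
    1 - exp (-(ε ^ β * (t * R ^ (-β)))) ≤ μ.real (Ioi R) + 2 * ε * (t * R ^ (-β)) := by
  have := h.toIsProbabilityMeasure
  have hint : Integrable ((Ioi R).indicator 1) μ :=
    (integrable_const (1 : ℝ)).indicator measurableSet_Ioi
  have hint' := (h.integrable_one_sub_exp (inv_nonneg.2 hR.le)).const_mul (2 * ε)
  have hpointwise : ∀ᵐ u ∂μ, 1 - exp (-(ε * R⁻¹ * u)) ≤
      (Ioi R).indicator 1 u + 2 * ε * (1 - exp (-(R⁻¹ * u))) := by
    filter_upwards [h.ae_pos] with u hu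
    have hmin := half_min_one_le_one_sub_exp_neg (show 0 ≤ R⁻¹ * u by positivity)
    rcases lt_or_ge R u with hRu | huR
    · have : 0 ≤ min (R⁻¹ * u) 1 := by positivity
      have : 0 ≤ 2 * ε * (1 - exp (-(R⁻¹ * u))) := mul_nonneg (by positivity) (by linarith)
      rw [indicator_of_mem (mem_Ioi.2 hRu), Pi.one_apply]
      linarith [exp_pos (-(ε * R⁻¹ * u))]
    · rw [min_eq_left (by rwa [inv_mul_eq_div, div_le_one hR])] at hmin
      rw [indicator_of_notMem (notMem_Ioi.2 huR), zero_add]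
      calc 1 - exp (-(ε * R⁻¹ * u)) ≤ ε * R⁻¹ * u := sub_le_comm.1 (one_sub_le_exp_neg _)
        _ = 2 * ε * (R⁻¹ * u / 2) := by ring
        _ ≤ 2 * ε * (1 - exp (-(R⁻¹ * u))) := by gcongr
  have hscale : t * (ε * R⁻¹) ^ β = ε ^ β * (t * R ^ (-β)) := by
    rw [mul_rpow hε (by positivity), inv_rpow hR.le, rpow_neg hR.le]
    ring
  calc 1 - exp (-(ε ^ β * (t * R ^ (-β)))) = ∫ u, (1 - exp (-(ε * R⁻¹ * u))) ∂μ := by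
        rw [h.integral_one_sub_exp (by positivity), hscale]
    _ ≤ ∫ u, ((Ioi R).indicator 1 u + 2 * ε * (1 - exp (-(R⁻¹ * u)))) ∂μ :=
        integral_mono_ae (h.integrable_one_sub_exp (by positivity)) (hint.add hint') hpointwise
    _ = μ.real (Ioi R) + 2 * ε * (1 - exp (-(t * R ^ (-β)))) := by
        rw [integral_add hint hint', integral_indicator_one measurableSet_Ioi, integral_const_mul,
          h.integral_one_sub_exp (by positivity), inv_rpow hR.le, rpow_neg hR.le]
    _ ≤ μ.real (Ioi R) + 2 * ε * (t * R ^ (-β)) := by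
        gcongr
        exact sub_le_comm.1 (one_sub_le_exp_neg _)

end IsStableLaw

lemma eventually_rpow_le {β δ : ℝ} (hβ : 0 < β) (hδ : 0 < δ) :
    ∀ᶠ ε in nhdsWithin 0 (Ioi 0), ε ^ β ≤ δ := by
  have h := (continuousAt_rpow_const 0 β (.inr hβ.le)).tendsto
  rw [zero_rpow hβ.ne'] at h
  exact (h.mono_left nhdsWithin_le_nhds).eventually_le_const hδ

namespace IsStableLaw

variable {β : ℝ}

lemma exists_mul_le_real_Ioi (hβ0 : 0 < β) (hβ1 : β < 1) {X : ℝ} (hX : 0 < X) :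
    ∃ c > 0, ∀ t μ, IsStableLaw β t μ → ∀ R > 0, 0 ≤ t → t * R ^ (-β) ≤ X →
      c * (t * R ^ (-β)) ≤ μ.real (Ioi R) := by
  obtain ⟨ε, ⟨hεX, hε8⟩, hε⟩ := ((eventually_rpow_le hβ0 (inv_pos.2 hX)).and
    (eventually_rpow_le (sub_pos.2 hβ1) (show (0 : ℝ) < 1 / 8 by norm_num))).and
    self_mem_nhdsWithin |>.exists
  have hε : 0 < ε := hε
  have hεβ : ε ≤ ε ^ β / 8 :=
    calc ε = ε ^ β * ε ^ (1 - β) := by rw [← rpow_add hε, add_sub_cancel, rpow_one]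
      _ ≤ ε ^ β * (1 / 8) := by gcongr
      _ = ε ^ β / 8 := by ring
  refine ⟨ε ^ β / 4, by positivity, fun t μ h R hR ht htX ↦ ?_⟩
  have htail := h.one_sub_exp_le_real_Ioi_add hR hε.le
  have hx : 0 ≤ t * R ^ (-β) := by positivity
  set x := t * R ^ (-β)
  have hle_one : ε ^ β * x ≤ 1 := by
    calc ε ^ β * x ≤ X⁻¹ * X := by gcongr
      _ = 1 := inv_mul_cancel₀ hX.ne'
  have hexp : ε ^ β * x / 2 ≤ 1 - exp (-(ε ^ β * x)) := by
    simpa only [min_eq_left hle_one] using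
      half_min_one_le_one_sub_exp_neg (x := ε ^ β * x) (by positivity)
  have : ε * x ≤ ε ^ β / 8 * x := by gcongr
  linarith

lemma exists_mul_le_real_Ioc (hβ0 : 0 < β) (hβ1 : β < 1) {X : ℝ} (hX : 0 < X) :
    ∃ K > 0, ∃ c > 0, ∀ t μ, IsStableLaw β t μ → ∀ R > 0, 0 ≤ t → t * R ^ (-β) ≤ X →
      c * (t * R ^ (-β)) ≤ μ.real (Ioc R (K * R)) := by
  obtain ⟨c, hc, htail⟩ := exists_mul_le_real_Ioi hβ0 hβ1 hX
  obtain ⟨K, hKc, hK⟩ := (((tendsto_rpow_neg_atTop hβ0).eventually_le_const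
    (show 0 < c / 4 by positivity)).and (eventually_gt_atTop 0)).exists
  refine ⟨K, hK, c / 2, by positivity, fun t μ h R hR ht htX ↦ ?_⟩
  have := h.toIsProbabilityMeasure
  have hcover : μ.real (Ioi R) ≤ μ.real (Ioc R (K * R)) + μ.real (Ici (K * R)) :=
    (measureReal_mono fun u hu ↦ (le_total u (K * R)).imp (⟨hu, ·⟩) id).trans
      (measureReal_union_le _ _)
  have hfar : μ.real (Ici (K * R)) ≤ c / 2 * (t * R ^ (-β)) :=
    calc μ.real (Ici (K * R)) ≤ 2 * (t * (K * R) ^ (-β)) := h.real_Ici_le (by positivity)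
      _ = 2 * K ^ (-β) * (t * R ^ (-β)) := by rw [mul_rpow hK.le hR.le]; ring
      _ ≤ 2 * (c / 4) * (t * R ^ (-β)) := by gcongr
      _ = c / 2 * (t * R ^ (-β)) := by ring
  linarith [htail t μ h R hR ht htX]

end IsStableLaw

lemma ofReal_rpow_neg_eq_lintegral {M u : ℝ} (hM : 0 < M) (hu : 0 < u) :
    ENNReal.ofReal (u ^ (-M)) * .ofReal (Gamma M) =
      ∫⁻ l in Ioi 0, .ofReal (l ^ (M - 1)) * .ofReal (exp (-(l * u))) := by
  have hGamma : ∫ l in Ioi 0, l ^ (M - 1) * exp (-(l * u)) = u ^ (-M) * Gamma M := by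
    simpa only [mul_comm u, one_div, inv_rpow hu.le, ← rpow_neg hu.le] using
      integral_rpow_mul_exp_neg_mul_Ioi hM hu
  have := Gamma_pos_of_pos hM
  rw [← ENNReal.ofReal_mul (by positivity), ← hGamma, ofReal_integral_eq_lintegral_ofReal
    (.of_integral_ne_zero (by rw [hGamma]; positivity))]
  · refine setLIntegral_congr_fun measurableSet_Ioi fun l (hl : 0 < l) ↦ ?_
    exact ENNReal.ofReal_mul (by positivity)
  · filter_upwards [ae_restrict_mem measurableSet_Ioi] with l (hl : 0 < l)
    positivity

lemma lintegral_rpow_neg_mul_Gamma {μ : Measure ℝ} [SFinite μ] (hμ : ∀ᵐ u ∂μ, 0 < u) {M : ℝ}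
    (hM : 0 < M) :
    (∫⁻ u, .ofReal (u ^ (-M)) ∂μ) * .ofReal (Gamma M) =
      ∫⁻ l in Ioi 0, .ofReal (l ^ (M - 1)) * ∫⁻ u, .ofReal (exp (-(l * u))) ∂μ := by
  calc (∫⁻ u, .ofReal (u ^ (-M)) ∂μ) * .ofReal (Gamma M)
      = ∫⁻ u, (∫⁻ l in Ioi 0, .ofReal (l ^ (M - 1)) * .ofReal (exp (-(l * u)))) ∂μ := by
        rw [← lintegral_mul_const _ (by fun_prop)]
        exact lintegral_congr_ae (hμ.mono fun u hu ↦ ofReal_rpow_neg_eq_lintegral hM hu)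
    _ = ∫⁻ l in Ioi 0, ∫⁻ u, .ofReal (l ^ (M - 1)) * .ofReal (exp (-(l * u))) ∂μ :=
        lintegral_lintegral_swap (by unfold Function.uncurry; fun_prop)
    _ = ∫⁻ l in Ioi 0, .ofReal (l ^ (M - 1)) * ∫⁻ u, .ofReal (exp (-(l * u))) ∂μ := by
        simp only [lintegral_const_mul' _ _ ENNReal.ofReal_ne_top]

namespace IsStableLaw

variable {β t : ℝ} {μ : Measure ℝ}

lemma lintegral_rpow_neg (h : IsStableLaw β t μ) (hβ : 0 < β) (ht : 0 < t) {M : ℝ} (hM : 0 < M) :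
    ∫⁻ u, .ofReal (u ^ (-M)) ∂μ =
      .ofReal (t ^ (-M / β) * (1 / β) * Gamma (M / β) / Gamma M) := by
  have := h.toIsProbabilityMeasure
  have hΓ : 0 < Gamma M := Gamma_pos_of_pos hM
  have hint : IntegrableOn (fun l ↦ l ^ (M - 1) * exp (-t * l ^ β)) (Ioi 0) :=
    integrableOn_rpow_mul_exp_neg_mul_rpow (by linarith) hβ ht
  have hval : ∫ l in Ioi 0, l ^ (M - 1) * exp (-t * l ^ β) =
      t ^ (-M / β) * (1 / β) * Gamma (M / β) := by
    rw [integral_rpow_mul_exp_neg_mul_rpow hβ (by linarith) ht, sub_add_cancel]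
  rw [ENNReal.ofReal_div_of_pos hΓ, ENNReal.eq_div_iff (by simpa) ENNReal.ofReal_ne_top, mul_comm,
    lintegral_rpow_neg_mul_Gamma h.ae_pos hM, ← hval, ofReal_integral_eq_lintegral_ofReal hint]
  · refine setLIntegral_congr_fun measurableSet_Ioi fun l (hl : 0 < l) ↦ ?_
    rw [← ofReal_integral_eq_lintegral_ofReal (h.integrable_exp hl.le)
      (.of_forall fun u ↦ (exp_pos _).le), h.integral_exp l hl.le,
      ← ENNReal.ofReal_mul (by positivity), neg_mul]
  · filter_upwards [ae_restrict_mem measurableSet_Ioi] with l (hl : 0 < l)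
    positivity

end IsStableLaw

/-- The measure `u ^ (-M) dμ(u)`. Against it one integrates `u ^ M * g u` in place of `g u`. -/
noncomputable def rpowWeighted (M : ℝ) (μ : Measure ℝ) : Measure ℝ :=
  μ.withDensity fun u ↦ .ofReal (u ^ (-M))

section Weighted

variable {M R : ℝ} (μ : Measure ℝ)

lemma rpowWeighted_Ici_le (hM : 0 ≤ M) (hR : 0 < R) :
    rpowWeighted M μ (Ici R) ≤ .ofReal (R ^ (-M)) * μ (Ici R) := by
  rw [rpowWeighted, withDensity_apply _ measurableSet_Ici, ← setLIntegral_const]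
  refine setLIntegral_mono' measurableSet_Ici fun u hu ↦ ENNReal.ofReal_le_ofReal ?_
  exact rpow_le_rpow_of_nonpos hR hu (neg_nonpos.2 hM)

lemma ofReal_rpow_mul_le_rpowWeighted_Ioi (hM : 0 ≤ M) (hR : 0 < R) (S : ℝ) :
    .ofReal (S ^ (-M)) * μ (Ioc R S) ≤ rpowWeighted M μ (Ioi R) := by
  rw [rpowWeighted, withDensity_apply _ measurableSet_Ioi]
  calc .ofReal (S ^ (-M)) * μ (Ioc R S) = ∫⁻ _ in Ioc R S, .ofReal (S ^ (-M)) ∂μ :=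
        (setLIntegral_const _ _).symm
    _ ≤ ∫⁻ u in Ioc R S, .ofReal (u ^ (-M)) ∂μ :=
        setLIntegral_mono' measurableSet_Ioc fun u hu ↦ ENNReal.ofReal_le_ofReal <|
          rpow_le_rpow_of_nonpos (hR.trans hu.1) hu.2 (neg_nonpos.2 hM)
    _ ≤ ∫⁻ u in Ioi R, .ofReal (u ^ (-M)) ∂μ := lintegral_mono_set Ioc_subset_Ioi_self

variable {μ}

lemma lintegral_rpowWeighted_indicator (hμ : ∀ᵐ u ∂μ, 0 < u) (M : ℝ) (g : ℝ → ℝ) :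
    ∫⁻ u, .ofReal ((Ioi 0).indicator (fun u ↦ u ^ M * g u) u) ∂rpowWeighted M μ =
      ∫⁻ u, .ofReal (g u) ∂μ := by
  rw [rpowWeighted, lintegral_withDensity_eq_lintegral_mul_non_measurable _ (by fun_prop)
    (.of_forall fun u ↦ ENNReal.ofReal_lt_top)]
  refine lintegral_congr_ae (hμ.mono fun u hu ↦ ?_)
  simp only [Pi.mul_apply, indicator_of_mem (mem_Ioi.2 hu)]
  rw [← ENNReal.ofReal_mul (by positivity), ← mul_assoc, ← rpow_add hu, neg_add_cancel, rpow_zero,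
    one_mul]

end Weighted

lemma monotone_indicator_Ioi {f : ℝ → ℝ} {a : ℝ} (hf : MonotoneOn f (Ioi a))
    (hf0 : ∀ u ∈ Ioi a, 0 ≤ f u) : Monotone ((Ioi a).indicator f) := by
  intro u v huv
  by_cases hu : u ∈ Ioi a
  · have hv : v ∈ Ioi a := lt_of_lt_of_le hu huv
    simpa only [indicator_of_mem hu, indicator_of_mem hv] using hf hu hv huv
  · rw [indicator_of_notMem hu]
    exact indicator_nonneg hf0 v

namespace IsStableLaw

variable {β a b M : ℝ}

lemma exists_rpowWeighted_Ici_le (hβ : 0 < β) (ha : 0 < a) (hb : 0 < b) (hM : 0 < M) :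
    ∃ A > 0, ∀ t ∈ Icc a b, ∀ μ, IsStableLaw β t μ → ∀ r,
      rpowWeighted M μ (Ici r) ≤ .ofReal (A * max r 1 ^ (-(M + β))) := by
  set B := a ^ (-M / β) * (1 / β) * Gamma (M / β) / Gamma M with hB
  refine ⟨max (2 * b) B, by positivity, fun t ht μ h r ↦ ?_⟩
  have ht0 : 0 < t := ha.trans_le ht.1
  rcases le_total r 1 with hr | hr
  · calc rpowWeighted M μ (Ici r) ≤ rpowWeighted M μ univ := measure_mono (subset_univ _)
      _ = .ofReal (t ^ (-M / β) * (1 / β) * Gamma (M / β) / Gamma M) := by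
        rw [rpowWeighted, withDensity_apply _ .univ, Measure.restrict_univ,
          h.lintegral_rpow_neg hβ ht0 hM]
      _ ≤ .ofReal B := by
        rw [hB]
        gcongr ENNReal.ofReal (?_ * _ * _ / _)
        exact rpow_le_rpow_of_nonpos ha ht.1 (div_nonpos_of_nonpos_of_nonneg (by linarith) hβ.le)
      _ ≤ .ofReal (max (2 * b) B * max r 1 ^ (-(M + β))) := by
        rw [max_eq_right hr, one_rpow, mul_one]
        gcongr
        exact le_max_right _ _
  · have hr0 : 0 < r := zero_lt_one.trans_le hr
    have := h.toIsProbabilityMeasure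
    calc rpowWeighted M μ (Ici r) ≤ .ofReal (r ^ (-M)) * μ (Ici r) :=
          rpowWeighted_Ici_le μ hM.le hr0
      _ ≤ .ofReal (r ^ (-M)) * .ofReal (2 * (b * r ^ (-β))) := by
        rw [← ofReal_measureReal]
        gcongr
        refine (h.real_Ici_le hr0).trans ?_
        gcongr
        exact ht.2
      _ = .ofReal (2 * b * r ^ (-(M + β))) := by
        rw [← ENNReal.ofReal_mul (by positivity), neg_add, rpow_add hr0]
        ring_nf
      _ ≤ .ofReal (max (2 * b) B * max r 1 ^ (-(M + β))) := by
        rw [max_eq_left hr]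
        gcongr
        exact le_max_left _ _

lemma exists_le_rpowWeighted_Ioi (hβ0 : 0 < β) (hβ1 : β < 1) (ha : 0 < a) (hb : 0 < b)
    (hM : 0 ≤ M) :
    ∃ c > 0, ∀ t ∈ Icc a b, ∀ μ, IsStableLaw β t μ → ∀ r,
      .ofReal (c * max r 1 ^ (-(M + β))) ≤ rpowWeighted M μ (Ioi r) := by
  obtain ⟨K, hK, c, hc, hwindow⟩ := exists_mul_le_real_Ioc hβ0 hβ1 hb
  refine ⟨K ^ (-M) * (c * a), by positivity, fun t ht μ h r ↦ ?_⟩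
  have := h.toIsProbabilityMeasure
  have ht0 : 0 < t := ha.trans_le ht.1
  set R := max r 1
  have hR1 : 1 ≤ R := le_max_right _ _
  have hR : 0 < R := zero_lt_one.trans_le hR1
  have htR : t * R ^ (-β) ≤ b := by
    simpa using mul_le_mul ht.2 (rpow_le_one_of_one_le_of_nonpos hR1 (neg_nonpos.2 hβ0.le))
      (by positivity) hb.le
  calc ENNReal.ofReal (K ^ (-M) * (c * a) * R ^ (-(M + β)))
      = .ofReal ((K * R) ^ (-M)) * .ofReal (c * (a * R ^ (-β))) := by
        rw [← ENNReal.ofReal_mul (by positivity), mul_rpow hK.le hR.le, neg_add, rpow_add hR]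
        ring_nf
    _ ≤ .ofReal ((K * R) ^ (-M)) * .ofReal (c * (t * R ^ (-β))) := by
        gcongr
        exact ht.1
    _ ≤ .ofReal ((K * R) ^ (-M)) * μ (Ioc R (K * R)) := by
        rw [← ofReal_measureReal]
        gcongr
        exact hwindow t μ h R hR ht0.le htR
    _ ≤ rpowWeighted M μ (Ioi R) := ofReal_rpow_mul_le_rpowWeighted_Ioi μ hM hR _
    _ ≤ rpowWeighted M μ (Ioi r) := measure_mono (Ioi_subset_Ioi (le_max_left _ _))

lemma exists_lintegral_le_mul_lintegral (hβ0 : 0 < β) (hβ1 : β < 1) (ha : 0 < a) (hb : 0 < b)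
    (hM : 0 < M) :
    ∃ C > 0, ∀ t ∈ Icc a b, ∀ t' ∈ Icc a b, ∀ μ μ', IsStableLaw β t μ → IsStableLaw β t' μ' →
      ∀ g : ℝ → ℝ, (∀ u > 0, 0 ≤ g u) → MonotoneOn (fun u ↦ u ^ M * g u) (Ioi 0) →
        ∫⁻ u, .ofReal (g u) ∂μ ≤ .ofReal C * ∫⁻ u, .ofReal (g u) ∂μ' := by
  obtain ⟨A, hA, hupper⟩ := exists_rpowWeighted_Ici_le hβ0 ha hb hM
  obtain ⟨c, hc, hlower⟩ := exists_le_rpowWeighted_Ioi hβ0 hβ1 ha hb hM.le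
  refine ⟨A / c, by positivity, fun t ht t' ht' μ μ' h h' g hg0 hg ↦ ?_⟩
  have hweighted (r : ℝ) :
      rpowWeighted M μ (Ici r) ≤ .ofReal (A / c) * rpowWeighted M μ' (Ioi r) :=
    calc rpowWeighted M μ (Ici r) ≤ .ofReal (A * max r 1 ^ (-(M + β))) := hupper t ht μ h r
      _ = .ofReal (A / c) * .ofReal (c * max r 1 ^ (-(M + β))) := by
        rw [← ENNReal.ofReal_mul (by positivity), ← mul_assoc, div_mul_cancel₀ A hc.ne']
      _ ≤ .ofReal (A / c) * rpowWeighted M μ' (Ioi r) := by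
        gcongr
        exact hlower t' ht' μ' h' r
  have hg0' : ∀ u ∈ Ioi 0, 0 ≤ u ^ M * g u := fun u (hu : 0 < u) ↦
    mul_nonneg (by positivity) (hg0 u hu)
  rw [← lintegral_rpowWeighted_indicator h.ae_pos M, ← lintegral_rpowWeighted_indicator h'.ae_pos M]
  exact lintegral_le_mul_lintegral_of_monotone ENNReal.ofReal_ne_top hweighted
    (monotone_indicator_Ioi hg hg0') (indicator_nonneg hg0')

end IsStableLaw

/-- The measure on `(0, ∞)` with density `σ t`. -/
noncomputable def densityLaw (σ : ℝ → ℝ → ℝ) (t : ℝ) : Measure ℝ :=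
  (volume.restrict (Ioi 0)).withDensity fun u ↦ .ofReal (σ t u)

section Subordination

variable {α ζ t : ℝ} {σ : ℝ → ℝ → ℝ}

lemma ae_pos_densityLaw : ∀ᵐ u ∂densityLaw σ t, 0 < u :=
  (withDensity_absolutelyContinuous _ _).ae_le (ae_restrict_mem measurableSet_Ioi)

lemma integral_densityLaw (hσ : IsStableSubordinatorDensity α σ) (ht : 0 < t) (g : ℝ → ℝ) :
    ∫ u, g u ∂densityLaw σ t = ∫ u in Ioi 0, g u * σ t u := by
  rw [densityLaw, integral_withDensity_eq_integral_toReal_smul (hσ.2.1 t ht).ennreal_ofReal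
    (.of_forall fun u ↦ ENNReal.ofReal_lt_top)]
  refine setIntegral_congr_fun measurableSet_Ioi fun u hu ↦ ?_
  simp only [ENNReal.toReal_ofReal (hσ.1 t ht u hu), smul_eq_mul, mul_comm]

lemma isStableLaw_densityLaw (hα : 0 < α) (hσ : IsStableSubordinatorDensity α σ) (ht : 0 < t) :
    IsStableLaw (α / 2) t (densityLaw σ t) := by
  have hexp (l : ℝ) (hl : 0 ≤ l) :
      ∫ u, exp (-(l * u)) ∂densityLaw σ t = exp (-(t * l ^ (α / 2))) := by
    rw [integral_densityLaw hσ ht, ← neg_mul, ← hσ.2.2 t l ht hl]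
    simp only [mul_comm l, neg_mul]
  have hmass : (densityLaw σ t).real univ = 1 := by
    simpa [zero_rpow (half_pos hα).ne'] using hexp 0 le_rfl
  exact ⟨⟨(ENNReal.toReal_eq_one_iff _).1 hmass⟩, ae_pos_densityLaw, hexp⟩

lemma subKernel_eq_toReal_lintegral (hζ : -1 / 2 < ζ) (hσ : IsStableSubordinatorDensity α σ)
    (ht : 0 < t) {r s : ℝ} (hr : 0 < r) (hs : 0 < s) :
    subKernel ζ σ t r s =
      (∫⁻ u, .ofReal (besselHeat ζ u r s) ∂densityLaw σ t).toReal := by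
  rw [subKernel, ← integral_densityLaw hσ ht, integral_eq_lintegral_of_nonneg_ae
    (ae_pos_densityLaw.mono fun u hu ↦ besselHeat_nonneg hζ hu hr hs)
    measurable_besselHeat.aestronglyMeasurable]

lemma toReal_le_mul_toReal {x y : ℝ≥0∞} {C : ℝ} (hC : 0 ≤ C) (hxy : x ≤ .ofReal C * y)
    (hyx : y ≤ .ofReal C * x) : x.toReal ≤ C * y.toReal := by
  by_cases hx : x = ∞
  · simpa [hx] using mul_nonneg hC y.toReal_nonneg
  · have hy : y ≠ ∞ := ne_top_of_le_ne_top (ENNReal.mul_ne_top ENNReal.ofReal_ne_top hx) hyx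
    simpa [hC] using ENNReal.toReal_mono (ENNReal.mul_ne_top ENNReal.ofReal_ne_top hy) hxy

lemma exists_subKernel_le_mul_subKernel (hζ : -1 / 2 < ζ) (hα0 : 0 < α) (hα2 : α < 2) {a b : ℝ}
    (ha : 0 < a) (hb : 0 < b) :
    ∃ C > 0, ∀ σ, IsStableSubordinatorDensity α σ → ∀ t ∈ Icc a b, ∀ t' ∈ Icc a b,
      ∀ r s, 0 < r → 0 < s → subKernel ζ σ t r s ≤ C * subKernel ζ σ t' r s := by
  obtain ⟨C, hC, hle⟩ := IsStableLaw.exists_lintegral_le_mul_lintegral (β := α / 2)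
    (M := ζ + 5 / 2) (by linarith) (by linarith) ha hb (by linarith)
  refine ⟨C, hC, fun σ hσ t ht t' ht' r s hr hs ↦ ?_⟩
  have hlintegral {t t' : ℝ} (ht : t ∈ Icc a b) (ht' : t' ∈ Icc a b) :=
    hle t ht t' ht' _ _ (isStableLaw_densityLaw hα0 hσ (ha.trans_le ht.1))
      (isStableLaw_densityLaw hα0 hσ (ha.trans_le ht'.1)) _
      (fun u hu ↦ besselHeat_nonneg hζ hu hr hs) (monotoneOn_rpow_mul_besselHeat hζ hr hs)
  rw [subKernel_eq_toReal_lintegral hζ hσ (ha.trans_le ht.1) hr hs,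
    subKernel_eq_toReal_lintegral hζ hσ (ha.trans_le ht'.1) hr hs]
  exact toReal_le_mul_toReal hC.le (hlintegral ht ht') (hlintegral ht' ht)

end Subordination

theorem stmt13 (ζ α C₀ : ℝ) (hζ : -1/2 < ζ) (hα0 : 0 < α) (hα2 : α < 2)
    (hC0 : 0 < C₀) (hC1 : C₀ ≤ 1)
    (σ : ℝ → ℝ → ℝ) (hσ : IsStableSubordinatorDensity α σ) :
    ∃ c C : ℝ, 0 < c ∧ 0 < C ∧
      ∀ τ ∈ Icc C₀ (1 / C₀), ∀ z s : ℝ, 0 < z → 0 < s →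
        c * subKernel ζ σ 1 z s ≤ subKernel ζ σ τ z s ∧
          subKernel ζ σ τ z s ≤ C * subKernel ζ σ 1 z s := by
  obtain ⟨C, hC, hle⟩ := exists_subKernel_le_mul_subKernel hζ hα0 hα2 hC0 (one_div_pos.2 hC0)
  have h1 : 1 ∈ Icc C₀ (1 / C₀) := ⟨hC1, (one_le_div hC0).2 hC1⟩
  refine ⟨C⁻¹, C, inv_pos.2 hC, hC, fun τ hτ z s hz hs ↦ ⟨?_, hle σ hσ τ hτ 1 h1 z s hz hs⟩⟩
  rw [inv_mul_le_iff₀ hC]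
  exact hle σ hσ 1 h1 τ hτ z s hz hs
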